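/- Let σ > 0, K > 0, r ∈ ℝ, T > 0. Define N(x) = ∫_{−∞}^x (2π)^{−1/2} e^{−z²/2} dz, and for 0 ≤ t < T and s > 0 define d_± = (ln(s/K) + (r ± σ²/2)(T − t))/(σ√(T − t)) and V(t, s) = N(d_+) s − N(d_−) K e^{−r(T−t)}. Then V satisfies the one-dimensional Black–Scholes PDE: for all 0 ≤ t < T and s > 0, ∂V/∂t (t, s) + r s ∂V/∂s (t, s) + (σ²/2) s² ∂²V/∂s² (t, s) − r V(t, s) = 0. -/

import Mathlib

/-!
Write `φ` for the standard normal density. The argument rests on two facts: `d₊ - d₋ = σ √(T - t)`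
(`dPlus_sub_dMinus`) and, as a consequence of completing the square,
`s φ(d₊) = K e^{-r(T-t)} φ(d₋)` (`density_balance`).

Since `∂d₊/∂s = ∂d₋/∂s = 1 / (s σ √(T - t))`, the balance identity cancels the density terms in
`∂V/∂s`, leaving `∂V/∂s = N(d₊)` and hence `∂²V/∂s² = φ(d₊) / (s σ √(T - t))`. In `∂V/∂t` the
density terms combine to `s φ(d₊) ∂(d₊ - d₋)/∂t = -s φ(d₊) σ / (2 √(T - t))`, so the individual
time derivatives of `d₊` and `d₋` are not needed. This term is exactly compensated by
`(σ²/2) s² ∂²V/∂s²`, and the remaining terms are `r V - r V`.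
-/

open MeasureTheory

/-- The cumulative distribution function of the standard normal distribution,
`N(x) = ∫_{-∞}^x (2π)^{-1/2} e^{-z²/2} dz`. -/
noncomputable def stdNormalCDF (x : ℝ) : ℝ :=
  ∫ z in Set.Iic x, (2 * Real.pi) ^ (-(1 : ℝ) / 2) * Real.exp (-z ^ 2 / 2)

/-- The standard normal density, with the normalisation used in `stdNormalCDF`. -/
noncomputable def stdNormalDensity (z : ℝ) : ℝ :=
  (2 * Real.pi) ^ (-(1 : ℝ) / 2) * Real.exp (-z ^ 2 / 2)

lemma integrable_stdNormalDensity : Integrable stdNormalDensity := by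
  have h := (integrable_exp_neg_mul_sq (b := 1 / 2) (by norm_num)).const_mul
    ((2 * Real.pi) ^ (-(1 : ℝ) / 2))
  refine h.congr (Filter.Eventually.of_forall fun z => ?_)
  simp only [stdNormalDensity]
  ring_nf

lemma hasDerivAt_stdNormalCDF (x : ℝ) : HasDerivAt stdNormalCDF (stdNormalDensity x) x := by
  have hc : Continuous stdNormalDensity := by
    unfold stdNormalDensity
    fun_prop
  have hN : stdNormalCDF =
      fun y => (∫ z in (0 : ℝ)..y, stdNormalDensity z) + stdNormalCDF 0 := by
    funext y
    rw [← intervalIntegral.integral_Iic_sub_Iic integrable_stdNormalDensity.integrableOn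
      integrable_stdNormalDensity.integrableOn]
    simp only [stdNormalCDF, stdNormalDensity, sub_add_cancel]
  rw [hN]
  exact (intervalIntegral.integral_hasDerivAt_right (hc.intervalIntegrable _ _)
    hc.stronglyMeasurable.stronglyMeasurableAtFilter hc.continuousAt).add_const _

/-- With `L = ln(s/K)` and `u = T - t`, this says `d₊ - d₋ = σ √(T - t)`. -/
lemma dPlus_sub_dMinus {σ u : ℝ} (r L : ℝ) (hσ : 0 < σ) (hu : 0 < u) :
    (L + (r + σ ^ 2 / 2) * u) / (σ * Real.sqrt u)
      - (L + (r - σ ^ 2 / 2) * u) / (σ * Real.sqrt u) = σ * Real.sqrt u := by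
  have hq : 0 < Real.sqrt u := Real.sqrt_pos.2 hu
  have hqq : Real.sqrt u ^ 2 = u := Real.sq_sqrt hu.le
  field_simp
  rw [hqq]
  ring

/-- The identity `s φ(d₊) = K e^{-ru} φ(d₋)` with `u = T - t`. It holds because
`(d₊² - d₋²) / 2 = ln(s/K) + r u`. -/
lemma density_balance {σ K s u : ℝ} (r : ℝ) (hσ : 0 < σ) (hK : 0 < K) (hs : 0 < s) (hu : 0 < u) :
    stdNormalDensity ((Real.log (s / K) + (r + σ ^ 2 / 2) * u) / (σ * Real.sqrt u)) * s
      = stdNormalDensity ((Real.log (s / K) + (r - σ ^ 2 / 2) * u) / (σ * Real.sqrt u))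
        * K * Real.exp (-r * u) := by
  have hq : 0 < Real.sqrt u := Real.sqrt_pos.2 hu
  have hqq : Real.sqrt u ^ 2 = u := Real.sq_sqrt hu.le
  have hsK : s = K * Real.exp (Real.log (s / K)) := by
    rw [Real.exp_log (div_pos hs hK)]
    field_simp
  generalize Real.log (s / K) = L at *
  subst hsK
  have key : -((L + (r + σ ^ 2 / 2) * u) / (σ * Real.sqrt u)) ^ 2 / 2 + L
      = -((L + (r - σ ^ 2 / 2) * u) / (σ * Real.sqrt u)) ^ 2 / 2 + -r * u := by
    simp only [div_pow, mul_pow, hqq]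
    field_simp
    ring
  have hexp := congrArg Real.exp key
  rw [Real.exp_add, Real.exp_add] at hexp
  simp only [stdNormalDensity]
  linear_combination (2 * Real.pi) ^ (-(1 : ℝ) / 2) * K * hexp

/-- The spatial derivative of `d₊` or `d₋`; the drift term `a` does not depend on `s`. -/
lemma hasDerivAt_logMoneyness {K s : ℝ} (a b : ℝ) (hK : 0 < K) (hs : 0 < s) :
    HasDerivAt (fun y => (Real.log (y / K) + a) / b) (1 / (s * b)) s := by
  have h := ((((hasDerivAt_id s).div_const K).log (div_pos hs hK).ne').add_const a).div_const b
  refine h.congr_deriv ?_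
  simp only [id]
  field_simp

/-- **The Black–Scholes formula satisfies the Black–Scholes PDE.** With
`d± (t, s) = (ln(s/K) + (r ± σ²/2)(T - t)) / (σ √(T - t))` and
`V(t, s) = N(d₊) s - N(d₋) K e^{-r(T-t)}`, one has, for all `0 ≤ t < T` and `s > 0`,
`∂V/∂t + r s ∂V/∂s + (σ²/2) s² ∂²V/∂s² - r V = 0`. -/
theorem black_scholes_formula_solves_pde
    (σ K r T : ℝ) (hσ : 0 < σ) (hK : 0 < K) (hT : 0 < T)
    (dp dm : ℝ → ℝ → ℝ)
    (hdp : ∀ t s, dp t s =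
      (Real.log (s / K) + (r + σ ^ 2 / 2) * (T - t)) / (σ * Real.sqrt (T - t)))
    (hdm : ∀ t s, dm t s =
      (Real.log (s / K) + (r - σ ^ 2 / 2) * (T - t)) / (σ * Real.sqrt (T - t)))
    (V : ℝ → ℝ → ℝ)
    (hV : ∀ t s, V t s =
      stdNormalCDF (dp t s) * s - stdNormalCDF (dm t s) * K * Real.exp (-r * (T - t))) :
    ∀ t s : ℝ, 0 ≤ t → t < T → 0 < s →
      deriv (fun τ => V τ s) t + r * s * deriv (fun y => V t y) s
        + σ ^ 2 / 2 * s ^ 2 * iteratedDeriv 2 (fun y => V t y) s - r * V t s = 0 := by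
  intro t s _ htT hs
  have hu : 0 < T - t := sub_pos.2 htT
  have hq : 0 < Real.sqrt (T - t) := Real.sqrt_pos.2 hu
  have hbal : ∀ y, 0 < y → stdNormalDensity (dp t y) * y
      = stdNormalDensity (dm t y) * K * Real.exp (-r * (T - t)) := by
    intro y hy
    rw [hdp, hdm]
    exact density_balance r hσ hK hy hu
  have hdps : ∀ y, 0 < y →
      HasDerivAt (fun y => dp t y) (1 / (y * (σ * Real.sqrt (T - t)))) y := by
    intro y hy
    simp only [hdp]
    exact hasDerivAt_logMoneyness _ _ hK hy
  have hdms : ∀ y, 0 < y →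
      HasDerivAt (fun y => dm t y) (1 / (y * (σ * Real.sqrt (T - t)))) y := by
    intro y hy
    simp only [hdm]
    exact hasDerivAt_logMoneyness _ _ hK hy
  have hVs : ∀ y, 0 < y → HasDerivAt (fun y => V t y) (stdNormalCDF (dp t y)) y := by
    intro y hy
    simp only [hV]
    have h1 := ((hasDerivAt_stdNormalCDF (dp t y)).comp y (hdps y hy)).mul (hasDerivAt_id y)
    have h2 := (((hasDerivAt_stdNormalCDF (dm t y)).comp y (hdms y hy)).mul_const K).mul_const
      (Real.exp (-r * (T - t)))
    refine (h1.sub h2).congr_deriv ?_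
    simp only [id, Function.comp]
    linear_combination (1 / (y * (σ * Real.sqrt (T - t)))) * hbal y hy
  have hVss : iteratedDeriv 2 (fun y => V t y) s
      = stdNormalDensity (dp t s) * (1 / (s * (σ * Real.sqrt (T - t)))) := by
    rw [iteratedDeriv_succ, iteratedDeriv_one]
    have heq : deriv (fun y => V t y) =ᶠ[nhds s] fun y => stdNormalCDF (dp t y) := by
      filter_upwards [lt_mem_nhds hs] with y hy using (hVs y hy).deriv
    rw [heq.deriv_eq]
    exact ((hasDerivAt_stdNormalCDF (dp t s)).comp s (hdps s hs)).deriv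
  have hsub : HasDerivAt (fun τ : ℝ => T - τ) (-1) t := by
    simpa using (hasDerivAt_id t).const_sub T
  have hsqrt : HasDerivAt (fun τ => Real.sqrt (T - τ)) (-1 / (2 * Real.sqrt (T - t))) t :=
    hsub.sqrt hu.ne'
  obtain ⟨A, hA⟩ : ∃ A, HasDerivAt (fun τ => dp τ s) A t := by
    simp only [hdp]
    exact ⟨_, ((hsub.const_mul (r + σ ^ 2 / 2)).const_add _).div (hsqrt.const_mul σ)
      (mul_pos hσ hq).ne'⟩
  have hB : HasDerivAt (fun τ => dm τ s) (A - σ * (-1 / (2 * Real.sqrt (T - t)))) t := by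
    refine (hA.sub (hsqrt.const_mul σ)).congr_of_eventuallyEq ?_
    filter_upwards [gt_mem_nhds htT] with τ hτ
    have h := dPlus_sub_dMinus r (Real.log (s / K)) hσ (sub_pos.2 hτ)
    rw [← hdp, ← hdm] at h
    simp only [Pi.sub_apply]
    linarith
  have hexp : HasDerivAt (fun τ => Real.exp (-r * (T - τ)))
      (Real.exp (-r * (T - t)) * (-r * -1)) t := (hsub.const_mul (-r)).exp
  have hVt : HasDerivAt (fun τ => V τ s)
      (-(stdNormalDensity (dp t s) * s * (σ / (2 * Real.sqrt (T - t))))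
        - r * (stdNormalCDF (dm t s) * K * Real.exp (-r * (T - t)))) t := by
    simp only [hV]
    have h1 := ((hasDerivAt_stdNormalCDF (dp t s)).comp t hA).mul_const s
    have h2 := (((hasDerivAt_stdNormalCDF (dm t s)).comp t hB).mul_const K).mul hexp
    refine (h1.sub h2).congr_deriv ?_
    simp only [Function.comp]
    linear_combination (A + σ / (2 * Real.sqrt (T - t))) * hbal s hs
  rw [hVt.deriv, (hVs s hs).deriv, hVss, hV]
  field_simp
  ring
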